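/- Let σ > 0 and μ ≥ 0 be constants. Then for every bounded d ∈ C²([0,∞);ℝ) and every classical solution u of the damped wave system with boundary input d, it holds that limsup_{t→+∞} ( (∫₀¹ u(t,x)² dx)^{1/2} ) ≤ G(μ,σ) · sup_{t≥0} |d(t)|, where G(μ,σ) is defined in the context. -/

import Mathlib

/-!
The proof decomposes the solution into sine modes. With `k = nπ`, the coefficient
`y(t) = ∫₀¹ u(t,x) √2 sin(kx) dx` satisfies `y'' + (μ + k²σ) y' + k² y = √2 k (d + σ d')`, so
variation of constants bounds `|y|` by a decaying transient plus `√2 k sup |d|` times the `L¹` norm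
of `h = e + σ e'`, where `e` is the impulse response of the oscillator.

The coefficient `A_n` is `k² ‖h‖₁`. If `h ≥ 0`, this is `1`, the normalised static gain. Otherwise
let `s` be the first zero of `h`. The identity `e'² + a e e' + k² e² = exp(-a t)`, with
`a = μ + k²σ`, shows that the normalised step response at `s` is at most
`1 + √(1 - μσ) exp(-a s / 2)`. For real poles `h` changes sign only once, which gives
`1 + 2 √(1 - μσ) exp(-a s / 2)`; for complex poles `h` reproduces itself with a factor `-q` after a
half period, which divides the last term by `1 - q`. The explicit impulse responses in the three
damping regimes serve to locate `s`.

Parseval's identity for the sine basis, read off from the Fourier series of the odd extension,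
turns the bounds on the modes into a bound on the `L²` norm. The limit `t → ∞` is exchanged with
the sum over the modes by Tannery's theorem: the transients are dominated by a square-summable
sequence because `|e'| ≤ 1` and `|e' + a e| ≤ 1` force `|e| ≤ 2 / a`, and the coefficients `A_n`
are bounded for large `n`.
-/

open Real Filter MeasureTheory intervalIntegral Set

noncomputable section

/-- Time derivative ∂u/∂t. -/
def u_t (u : ℝ → ℝ → ℝ) (t x : ℝ) : ℝ := deriv (fun τ => u τ x) t

/-- Second time derivative ∂²u/∂t². -/
def u_tt (u : ℝ → ℝ → ℝ) (t x : ℝ) : ℝ := deriv (deriv (fun τ => u τ x)) t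

/-- Second space derivative ∂²u/∂x². -/
def u_xx (u : ℝ → ℝ → ℝ) (t x : ℝ) : ℝ := deriv (deriv (fun y => u t y)) x

/-- Mixed derivative ∂³u/∂t∂x². -/
def u_txx (u : ℝ → ℝ → ℝ) (t x : ℝ) : ℝ := deriv (deriv (fun y => u_t u t y)) x

/-- A classical solution of the wave equation with Kelvin-Voigt and viscous damping
with boundary input `d`: `u` is of class `C²`, `x ↦ ∂u/∂t(t,x)` is of class `C²` for
each `t ≥ 0`, the PDE holds for `t ≥ 0`, `x ∈ [0,1]`, and `u(t,0) = d(t)`, `u(t,1) = 0`. -/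
def IsClassicalSolution (σ μ : ℝ) (d : ℝ → ℝ) (u : ℝ → ℝ → ℝ) : Prop :=
  ContDiff ℝ 2 (Function.uncurry u) ∧
  (∀ t : ℝ, 0 ≤ t → ContDiff ℝ 2 (fun x => u_t u t x)) ∧
  (∀ t x : ℝ, 0 ≤ t → x ∈ Set.Icc (0:ℝ) 1 →
    u_tt u t x = u_xx u t x + σ * u_txx u t x - μ * u_t u t x) ∧
  (∀ t : ℝ, 0 ≤ t → u t 0 = d t ∧ u t 1 = 0)

/-- A bounded disturbance of class `C²`. -/
def BddC2 (d : ℝ → ℝ) : Prop :=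
  ContDiff ℝ 2 d ∧ ∃ M : ℝ, ∀ t : ℝ, 0 ≤ t → |d t| ≤ M

/-- `sup_{t ≥ 0} |d(t)|`. -/
def supD (d : ℝ → ℝ) : ℝ := sSup {y : ℝ | ∃ t : ℝ, 0 ≤ t ∧ y = |d t|}

/-- `max_{x ∈ [0,1]} |u(t,x)|`, the spatial sup norm of the displacement. -/
def supNorm (u : ℝ → ℝ → ℝ) (t : ℝ) : ℝ :=
  sSup {y : ℝ | ∃ x ∈ Set.Icc (0:ℝ) 1, y = |u t x|}

/-- `(∫₀¹ u(t,x)² dx)^{1/2}`, the spatial L² norm of the displacement. -/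
def L2Norm (u : ℝ → ℝ → ℝ) (t : ℝ) : ℝ := Real.sqrt (∫ x in (0:ℝ)..1, (u t x) ^ 2)

/-- The coefficients `A_n` (for the case `0 ≤ μσ < 1`), defined by cases:
overdamped with `nπσ ≥ 1`, overdamped/critical with `nπσ < 1` (where `A_n = 1`),
critically damped with `nπσ = 1 + √(1−μσ)`, and underdamped. -/
def Acoef (σ μ : ℝ) (n : ℕ) : ℝ :=
  if 2 * (n:ℝ) * π < μ + (n:ℝ) ^ 2 * π ^ 2 * σ then
    (if 1 ≤ (n:ℝ) * π * σ then
      (1 + 2 * Real.sqrt (1 - μ * σ) *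
        ((2 * ((μ + (n:ℝ) ^ 2 * π ^ 2 * σ) /
              Real.sqrt ((μ + (n:ℝ) ^ 2 * π ^ 2 * σ) ^ 2 - 4 * (n:ℝ) ^ 2 * π ^ 2)) *
            Real.sqrt (1 - μ * σ)) /
          (σ * (μ + (n:ℝ) ^ 2 * π ^ 2 * σ) *
              (1 + (μ + (n:ℝ) ^ 2 * π ^ 2 * σ) /
                Real.sqrt ((μ + (n:ℝ) ^ 2 * π ^ 2 * σ) ^ 2 - 4 * (n:ℝ) ^ 2 * π ^ 2)) -
            2 * ((μ + (n:ℝ) ^ 2 * π ^ 2 * σ) /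
              Real.sqrt ((μ + (n:ℝ) ^ 2 * π ^ 2 * σ) ^ 2 - 4 * (n:ℝ) ^ 2 * π ^ 2)))) ^
          ((μ + (n:ℝ) ^ 2 * π ^ 2 * σ) /
            Real.sqrt ((μ + (n:ℝ) ^ 2 * π ^ 2 * σ) ^ 2 - 4 * (n:ℝ) ^ 2 * π ^ 2)))
    else 1)
  else if μ + (n:ℝ) ^ 2 * π ^ 2 * σ = 2 * (n:ℝ) * π then
    (if (n:ℝ) * π * σ = 1 + Real.sqrt (1 - μ * σ) then
      1 + 2 * Real.sqrt (1 - μ * σ) * Real.exp (-1 - 1 / Real.sqrt (1 - μ * σ))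
    else 1)
  else
    1 + 2 * Real.sqrt (1 - σ * μ) *
      Real.exp (((μ + (n:ℝ) ^ 2 * π ^ 2 * σ) /
          Real.sqrt (4 * (n:ℝ) ^ 2 * π ^ 2 - (μ + (n:ℝ) ^ 2 * π ^ 2 * σ) ^ 2)) *
        Real.arccos ((2 - σ * μ - (n:ℝ) ^ 2 * π ^ 2 * σ ^ 2) /
          (2 * Real.sqrt (1 - σ * μ)))) /
      (Real.exp ((μ + (n:ℝ) ^ 2 * π ^ 2 * σ) * π /
          Real.sqrt (4 * (n:ℝ) ^ 2 * π ^ 2 - (μ + (n:ℝ) ^ 2 * π ^ 2 * σ) ^ 2)) - 1)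

/-- The constant `G(μ,σ)`: `1/√3` if `μσ ≥ 1`, and
`(1/π)√(2 Σ_{n=1}^∞ n^{−2} A_n²)` if `0 ≤ μσ < 1`. -/
def Gconst (μ σ : ℝ) : ℝ :=
  if 1 ≤ μ * σ then 1 / Real.sqrt 3
  else (1 / π) * Real.sqrt (2 * ∑' n : ℕ, (Acoef σ μ (n + 1)) ^ 2 / ((n:ℝ) + 1) ^ 2)

/-! ### `L¹` bounds for functions with a known primitive -/

/-- The `L¹` norm of `h` on `[0, ∞)` is at most `C`. This is stated on the intervals `[0, T]`, so
that no integrability on the half-line has to be established. -/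
def L1NormLE (h : ℝ → ℝ) (C : ℝ) : Prop :=
  ∀ T, 0 ≤ T → ∫ t in 0..T, |h t| ≤ C

section Primitive

variable {g h : ℝ → ℝ} {s t L : ℝ}

lemma integral_abs_of_nonneg (hg : ∀ t, HasDerivAt g (h t) t) (hh : Continuous h) (hst : s ≤ t)
    (hpos : ∀ r ∈ Icc s t, 0 ≤ h r) : ∫ r in s..t, |h r| = g t - g s := by
  rw [← integral_eq_sub_of_hasDerivAt (fun r _ => hg r) (hh.intervalIntegrable s t)]
  exact integral_congr fun r hr => abs_of_nonneg (hpos r (uIcc_of_le hst ▸ hr))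

lemma integral_abs_of_nonpos (hg : ∀ t, HasDerivAt g (h t) t) (hh : Continuous h) (hst : s ≤ t)
    (hneg : ∀ r ∈ Icc s t, h r ≤ 0) : ∫ r in s..t, |h r| = g s - g t := by
  have hint := integral_abs_of_nonneg (fun r => (hg r).neg) hh.neg hst
    fun r hr => neg_nonneg.2 (hneg r hr)
  simp only [Pi.neg_apply, abs_neg] at hint
  linarith

lemma le_of_tendsto_of_deriv_nonneg (hg : ∀ t, HasDerivAt g (h t) t)
    (hlim : Tendsto g atTop (nhds L)) (hpos : ∀ r, s ≤ r → 0 ≤ h r) : g s ≤ L := by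
  have hmono : MonotoneOn g (Ici s) := monotoneOn_of_hasDerivWithinAt_nonneg (convex_Ici s)
    (fun r _ => (hg r).continuousAt.continuousWithinAt) (fun r _ => (hg r).hasDerivWithinAt)
    fun r hr => hpos r (interior_subset hr)
  exact ge_of_tendsto hlim ((eventually_ge_atTop s).mono fun r hr => hmono self_mem_Ici hr hr)

namespace L1NormLE

lemma of_nonneg (hg : ∀ t, HasDerivAt g (h t) t) (hh : Continuous h)
    (hlim : Tendsto g atTop (nhds L)) (hpos : ∀ r, 0 ≤ r → 0 ≤ h r) : L1NormLE h (L - g 0) := by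
  intro T hT
  rw [integral_abs_of_nonneg hg hh hT fun r hr => hpos r hr.1]
  gcongr
  exact le_of_tendsto_of_deriv_nonneg hg hlim fun r hr => hpos r (hT.trans hr)

lemma of_sign_change (hg : ∀ t, HasDerivAt g (h t) t) (hh : Continuous h)
    (hlim : Tendsto g atTop (nhds L)) (hs : 0 ≤ s) (hpos : ∀ r ∈ Icc 0 s, 0 ≤ h r)
    (hneg : ∀ r, s ≤ r → h r ≤ 0) : L1NormLE h (2 * g s - g 0 - L) := by
  intro T hT
  have hint : ∀ p q, IntervalIntegrable (fun r => |h r|) volume p q :=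
    hh.abs.intervalIntegrable
  have hTR : T ≤ max T s := le_max_left T s
  have hsR : s ≤ max T s := le_max_right T s
  have hR : L ≤ g (max T s) := neg_le_neg_iff.1 <|
    le_of_tendsto_of_deriv_nonneg (g := -g) (fun r => (hg r).neg) hlim.neg
      fun r hr => neg_nonneg.2 (hneg r (hsR.trans hr))
  calc ∫ r in 0..T, |h r|
      ≤ ∫ r in 0..max T s, |h r| := integral_mono_interval le_rfl hT hTR
        (Eventually.of_forall fun r => abs_nonneg (h r)) (hint _ _)
    _ = (g s - g 0) + (g s - g (max T s)) := by
        rw [← integral_add_adjacent_intervals (hint 0 s) (hint s _),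
          integral_abs_of_nonneg hg hh hs hpos,
          integral_abs_of_nonpos hg hh hsR fun r hr => hneg r hr.1]
    _ ≤ 2 * g s - g 0 - L := by linarith

/-- If `I` is the integral of `|h|` up to time `T`, then the integral up to time `T + τ` is the
integral over the first period plus `q * I`, and it is at least `I`. -/
lemma of_antiperiodic {τ q : ℝ} (hg : ∀ t, HasDerivAt g (h t) t) (hh : Continuous h)
    (hs : 0 ≤ s) (hsτ : s ≤ τ) (hq0 : 0 ≤ q) (hq1 : q < 1) (hpos : ∀ r ∈ Icc 0 s, 0 ≤ h r)
    (hneg : ∀ r ∈ Icc s τ, h r ≤ 0) (hτ : ∀ r, h (r + τ) = -q * h r) :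
    L1NormLE h ((2 * g s - g 0 - g τ) / (1 - q)) := by
  intro T hT
  have hint : ∀ p q, IntervalIntegrable (fun r => |h r|) volume p q :=
    hh.abs.intervalIntegrable
  have hfirst : ∫ r in 0..τ, |h r| = 2 * g s - g 0 - g τ := by
    rw [← integral_add_adjacent_intervals (hint 0 s) (hint s τ),
      integral_abs_of_nonneg hg hh hs hpos, integral_abs_of_nonpos hg hh hsτ hneg]
    ring
  have hshift : ∫ r in τ..(T + τ), |h r| = q * ∫ r in 0..T, |h r| := by
    have hcomp := integral_comp_add_right (a := 0) (b := T) (fun r => |h r|) τ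
    simp only [hτ, zero_add, abs_mul, abs_neg, abs_of_nonneg hq0] at hcomp
    rw [← hcomp, intervalIntegral.integral_const_mul]
  have hmono : ∫ r in 0..T, |h r| ≤ ∫ r in 0..(T + τ), |h r| :=
    integral_mono_interval le_rfl hT (by linarith)
      (Eventually.of_forall fun r => abs_nonneg (h r)) (hint _ _)
  rw [← integral_add_adjacent_intervals (hint 0 τ) (hint τ (T + τ)), hfirst, hshift] at hmono
  rw [le_div_iff₀ (sub_pos.2 hq1)]
  linarith

end L1NormLE

end Primitive

/-! ### Impulse responses of damped oscillators -/

/-- `e` is the impulse response of the oscillator `y'' + a y' + b y = f`, `v` is its derivative, and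
both decay at infinity. -/
structure IsImpulseResponse (a b : ℝ) (e v : ℝ → ℝ) : Prop where
  pos_zero : e 0 = 0
  vel_zero : v 0 = 1
  hasDerivAt_pos : ∀ t, HasDerivAt e (v t) t
  hasDerivAt_vel : ∀ t, HasDerivAt v (-a * v t - b * e t) t
  tendsto_pos : Tendsto e atTop (nhds 0)
  tendsto_vel : Tendsto v atTop (nhds 0)

/-- `y`, with derivative `y'`, is a motion on `[0, ∞)` of the oscillator
`y'' + a y' + b y = f + σ f'`, where `f'` is the derivative of `f`. -/
structure IsForcedMotion (a b σ : ℝ) (f f' y y' : ℝ → ℝ) : Prop where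
  hasDerivAt_force : ∀ t, 0 ≤ t → HasDerivAt f (f' t) t
  hasDerivAt_pos : ∀ t, 0 ≤ t → HasDerivAt y (y' t) t
  hasDerivAt_vel : ∀ t, 0 ≤ t → HasDerivAt y' (f t + σ * f' t - a * y' t - b * y t) t

/-- The step response of an oscillator with input `f + σ f'`: the primitive of the impulse response
`e + σ v` that vanishes at `0`. -/
def stepResponse (a b σ : ℝ) (e v : ℝ → ℝ) (t : ℝ) : ℝ :=
  (1 - (v t + a * e t)) / b + σ * e t

namespace IsImpulseResponse

variable {a b σ : ℝ} {e v : ℝ → ℝ}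

lemma continuous_pos (K : IsImpulseResponse a b e v) : Continuous e :=
  continuous_iff_continuousAt.2 fun t => (K.hasDerivAt_pos t).continuousAt

lemma continuous_vel (K : IsImpulseResponse a b e v) : Continuous v :=
  continuous_iff_continuousAt.2 fun t => (K.hasDerivAt_vel t).continuousAt

lemma hasDerivAt_momentum (K : IsImpulseResponse a b e v) (t : ℝ) :
    HasDerivAt (fun s => v s + a * e s) (-b * e t) t :=
  ((K.hasDerivAt_vel t).add ((K.hasDerivAt_pos t).const_mul a)).congr_deriv (by ring)

lemma abs_vel_le_one (K : IsImpulseResponse a b e v) (ha : 0 ≤ a) (hb : 0 ≤ b) {t : ℝ}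
    (ht : 0 ≤ t) : |v t| ≤ 1 := by
  have henergy : v t ^ 2 + b * e t ^ 2 ≤ v 0 ^ 2 + b * e 0 ^ 2 := by
    refine antitone_of_hasDerivAt_nonpos (f := fun t => v t ^ 2 + b * e t ^ 2)
      (f' := fun t => -(2 * a * v t ^ 2)) (fun t => ?_) (fun t => neg_nonpos.2 (by positivity)) ht
    refine (((K.hasDerivAt_vel t).pow 2).add
      (((K.hasDerivAt_pos t).pow 2).const_mul b)).congr_deriv ?_
    push_cast; ring
  rw [K.pos_zero, K.vel_zero] at henergy
  rw [← sq_le_one_iff_abs_le_one]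
  linarith [mul_nonneg hb (sq_nonneg (e t))]

/-- The combination `v + a e`, which propagates the initial position, is again a solution of the
homogeneous equation, with its own nonincreasing energy. -/
lemma abs_momentum_le_one (K : IsImpulseResponse a b e v) (ha : 0 ≤ a) (hb : 0 ≤ b) {t : ℝ}
    (ht : 0 ≤ t) : |v t + a * e t| ≤ 1 := by
  have henergy : (v t + a * e t) ^ 2 + b * e t ^ 2 ≤ (v 0 + a * e 0) ^ 2 + b * e 0 ^ 2 := by
    refine antitone_of_hasDerivAt_nonpos (f := fun t => (v t + a * e t) ^ 2 + b * e t ^ 2)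
      (f' := fun t => -(2 * a * b * e t ^ 2)) (fun t => ?_)
      (fun t => neg_nonpos.2 (by positivity)) ht
    refine (((K.hasDerivAt_momentum t).pow 2).add
      (((K.hasDerivAt_pos t).pow 2).const_mul b)).congr_deriv ?_
    push_cast; ring
  rw [K.pos_zero, K.vel_zero] at henergy
  rw [← sq_le_one_iff_abs_le_one]
  linarith [mul_nonneg hb (sq_nonneg (e t))]

/-- For the `n`-th mode this bound on `e` is of order `1 / n²`. The energy alone only gives order
`1 / n`, which is too weak for square-summability over the modes. -/
lemma abs_pos_le (K : IsImpulseResponse a b e v) (ha : 0 < a) (hb : 0 ≤ b) {t : ℝ} (ht : 0 ≤ t) :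
    |e t| ≤ 2 / a := by
  rw [le_div_iff₀' ha]
  calc a * |e t| = |a * e t| := by rw [abs_mul, abs_of_pos ha]
    _ = |(v t + a * e t) - v t| := by rw [add_sub_cancel_left]
    _ ≤ |v t + a * e t| + |v t| := abs_sub _ _
    _ ≤ 2 := by linarith [K.abs_momentum_le_one ha.le hb ht, K.abs_vel_le_one ha.le hb ht]

lemma quadForm_eq_exp (K : IsImpulseResponse a b e v) (t : ℝ) :
    v t ^ 2 + a * e t * v t + b * e t ^ 2 = exp (-(a * t)) := by
  have hderiv : ∀ t, HasDerivAt
      (fun t => (v t ^ 2 + a * e t * v t + b * e t ^ 2) * exp (a * t)) 0 t := fun t => by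
    refine (((((K.hasDerivAt_vel t).pow 2).add
      (((K.hasDerivAt_pos t).const_mul a).mul (K.hasDerivAt_vel t))).add
      (((K.hasDerivAt_pos t).pow 2).const_mul b)).mul
      (hasDerivAt_const_mul a).exp).congr_deriv ?_
    simp only [Pi.add_apply, Pi.mul_apply, Pi.pow_apply]
    push_cast; ring
  have hconst := is_const_of_deriv_eq_zero (fun t => (hderiv t).differentiableAt)
    (fun t => (hderiv t).deriv) t 0
  rw [exp_neg]
  refine eq_inv_of_mul_eq_one_left (hconst.trans ?_)
  simp [K.pos_zero, K.vel_zero]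

/-- Integrating `f'` by parts turns the kernel `e` into `e + σ v`. -/
lemma variation_of_constants (K : IsImpulseResponse a b e v) {f f' y y' : ℝ → ℝ}
    (M : IsForcedMotion a b σ f f' y y') {T : ℝ} (hT : 0 ≤ T) :
    y T = (v T + a * e T) * y 0 + e T * (y' 0 - σ * f 0)
      + ∫ s in 0..T, (e (T - s) + σ * v (T - s)) * f s := by
  have he := K.continuous_pos
  have hv := K.continuous_vel
  have hf : ContinuousOn f (uIcc 0 T) := fun s hs => by
    rw [uIcc_of_le hT] at hs
    exact (M.hasDerivAt_force s hs.1).continuousAt.continuousWithinAt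
  have hFTC := integral_eq_sub_of_hasDerivAt (a := 0) (b := T)
    (f := fun s => (v (T - s) + a * e (T - s)) * y s + e (T - s) * (y' s - σ * f s))
    (f' := fun s => (e (T - s) + σ * v (T - s)) * f s)
    (fun s hs => by
      rw [uIcc_of_le hT] at hs
      have hmomentum := (K.hasDerivAt_momentum (T - s)).comp_const_sub T s
      have hpos := (K.hasDerivAt_pos (T - s)).comp_const_sub T s
      refine ((hmomentum.mul (M.hasDerivAt_pos s hs.1)).add (hpos.mul
        ((M.hasDerivAt_vel s hs.1).sub ((M.hasDerivAt_force s hs.1).const_mul σ)))).congr_deriv ?_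
      simp only [Pi.sub_apply]
      ring)
    (ContinuousOn.intervalIntegrable (by fun_prop))
  rw [hFTC]
  simp [K.pos_zero, K.vel_zero]

lemma abs_motion_le (K : IsImpulseResponse a b e v) {f f' y y' : ℝ → ℝ}
    (M : IsForcedMotion a b σ f f' y y') {F C : ℝ} (hF : ∀ t, 0 ≤ t → |f t| ≤ F)
    (hC : L1NormLE (fun t => e t + σ * v t) C) {T : ℝ} (hT : 0 ≤ T) :
    |y T| ≤ |v T + a * e T| * |y 0| + |e T| * |y' 0 - σ * f 0| + F * C := by
  have he := K.continuous_pos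
  have hv := K.continuous_vel
  have hf : ContinuousOn f (uIcc 0 T) := fun s hs => by
    rw [uIcc_of_le hT] at hs
    exact (M.hasDerivAt_force s hs.1).continuousAt.continuousWithinAt
  have hforced : |∫ s in 0..T, (e (T - s) + σ * v (T - s)) * f s| ≤ F * C :=
    calc |∫ s in 0..T, (e (T - s) + σ * v (T - s)) * f s|
        ≤ ∫ s in 0..T, |(e (T - s) + σ * v (T - s)) * f s| := abs_integral_le_integral_abs hT
      _ ≤ ∫ s in 0..T, F * |e (T - s) + σ * v (T - s)| := by
          refine integral_mono_on hT (ContinuousOn.intervalIntegrable (by fun_prop))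
            (Continuous.intervalIntegrable (by fun_prop) _ _) fun s hs => ?_
          rw [abs_mul, mul_comm]
          gcongr
          exact hF s hs.1
      _ = F * ∫ s in 0..T, |e s + σ * v s| := by
          rw [intervalIntegral.integral_const_mul,
            integral_comp_sub_left (fun s => |e s + σ * v s|), sub_self, sub_zero]
      _ ≤ F * C := mul_le_mul_of_nonneg_left (hC T hT) ((abs_nonneg _).trans (hF 0 le_rfl))
  rw [K.variation_of_constants M hT, ← abs_mul, ← abs_mul]
  exact (abs_add_three _ _ _).trans (add_le_add le_rfl hforced)

lemma exists_transient (K : IsImpulseResponse a b e v) (ha : 0 < a) (hb : 0 ≤ b)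
    {f f' y y' : ℝ → ℝ} (M : IsForcedMotion a b σ f f' y y') {F C : ℝ}
    (hF : ∀ t, 0 ≤ t → |f t| ≤ F) (hC : L1NormLE (fun t => e t + σ * v t) C) :
    ∃ z : ℝ → ℝ, Tendsto z atTop (nhds 0) ∧
      (∀ t, 0 ≤ t → |z t| ≤ |y 0| + 2 / a * |y' 0 - σ * f 0|) ∧
      ∀ t, 0 ≤ t → |y t| ≤ z t + F * C := by
  refine ⟨fun t => |v t + a * e t| * |y 0| + |e t| * |y' 0 - σ * f 0|, ?_, fun t ht => ?_,
    fun t ht => K.abs_motion_le M hF hC ht⟩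
  · simpa using ((K.tendsto_vel.add (K.tendsto_pos.const_mul a)).abs.mul_const |y 0|).add
      (K.tendsto_pos.abs.mul_const |y' 0 - σ * f 0|)
  · rw [abs_of_nonneg (by positivity)]
    exact add_le_add (mul_le_of_le_one_left (abs_nonneg _) (K.abs_momentum_le_one ha.le hb ht))
      (mul_le_mul_of_nonneg_right (K.abs_pos_le ha hb ht) (abs_nonneg _))

lemma stepResponse_zero (K : IsImpulseResponse a b e v) : stepResponse a b σ e v 0 = 0 := by
  simp [stepResponse, K.pos_zero, K.vel_zero]

lemma hasDerivAt_stepResponse (K : IsImpulseResponse a b e v) (hb : b ≠ 0) (t : ℝ) :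
    HasDerivAt (stepResponse a b σ e v) (e t + σ * v t) t := by
  refine ((((K.hasDerivAt_momentum t).const_sub 1).div_const b).add
    ((K.hasDerivAt_pos t).const_mul σ)).congr_deriv ?_
  field_simp

lemma tendsto_stepResponse (K : IsImpulseResponse a b e v) :
    Tendsto (stepResponse a b σ e v) atTop (nhds (1 / b)) := by
  unfold stepResponse
  simpa using (((K.tendsto_vel.add (K.tendsto_pos.const_mul a)).const_sub 1).div_const b).add
    (K.tendsto_pos.const_mul σ)

/-- At a zero of `e + σ v` one has `e = -σ v`, so that `quadForm_eq_exp` determines `v` up to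
sign. -/
lemma stepResponse_le_of_eq_zero (K : IsImpulseResponse a b e v) (hb : 0 < b) {t : ℝ}
    (ht : e t + σ * v t = 0) :
    stepResponse a b σ e v t ≤ (1 + √(1 - a * σ + b * σ ^ 2) * exp (-(a * t / 2))) / b := by
  have he : e t = -(σ * v t) := by linarith
  have hquad : (1 - a * σ + b * σ ^ 2) * v t ^ 2 = exp (-(a * t)) := by
    rw [← K.quadForm_eq_exp, he]; ring
  have hstep : stepResponse a b σ e v t = (1 + -((1 - a * σ + b * σ ^ 2) * v t)) / b := by
    rw [stepResponse, he]; field_simp; ring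
  have hsqrt : √(1 - a * σ + b * σ ^ 2) * exp (-(a * t / 2)) =
      √((1 - a * σ + b * σ ^ 2) * exp (-(a * t))) := by
    rw [sqrt_mul' _ (exp_pos _).le, ← exp_half]; congr 2; ring
  rw [hstep, hsqrt]
  gcongr
  refine le_sqrt_of_sq_le (le_of_eq ?_)
  rw [← hquad]; ring

lemma l1NormLE_of_nonneg (K : IsImpulseResponse a b e v) (hb : b ≠ 0)
    (hpos : ∀ t, 0 ≤ t → 0 ≤ e t + σ * v t) : L1NormLE (fun t => e t + σ * v t) (1 / b) := by
  have he := K.continuous_pos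
  have hv := K.continuous_vel
  simpa [K.stepResponse_zero] using L1NormLE.of_nonneg (K.hasDerivAt_stepResponse hb)
    (by fun_prop) K.tendsto_stepResponse hpos

lemma l1NormLE_of_sign_change (K : IsImpulseResponse a b e v) (hb : 0 < b) {s : ℝ} (hs : 0 ≤ s)
    (hpos : ∀ t ∈ Icc 0 s, 0 ≤ e t + σ * v t) (hneg : ∀ t, s ≤ t → e t + σ * v t ≤ 0) :
    L1NormLE (fun t => e t + σ * v t)
      ((1 + 2 * √(1 - a * σ + b * σ ^ 2) * exp (-(a * s / 2))) / b) := by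
  have he := K.continuous_pos
  have hv := K.continuous_vel
  intro T hT
  refine (L1NormLE.of_sign_change (K.hasDerivAt_stepResponse hb.ne') (by fun_prop)
    K.tendsto_stepResponse hs hpos hneg T hT).trans ?_
  have hheight := K.stepResponse_le_of_eq_zero hb
    (le_antisymm (hneg s le_rfl) (hpos s ⟨hs, le_rfl⟩))
  calc _ ≤ 2 * ((1 + √(1 - a * σ + b * σ ^ 2) * exp (-(a * s / 2))) / b) - 0 - 1 / b := by
        rw [K.stepResponse_zero]; gcongr
    _ = _ := by ring

lemma l1NormLE_of_antiperiodic (K : IsImpulseResponse a b e v) (hb : 0 < b) {s τ q : ℝ}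
    (hs : 0 ≤ s) (hsτ : s ≤ τ) (hq0 : 0 ≤ q) (hq1 : q < 1)
    (hpos : ∀ t ∈ Icc 0 s, 0 ≤ e t + σ * v t) (hneg : ∀ t ∈ Icc s τ, e t + σ * v t ≤ 0)
    (heτ : ∀ t, e (t + τ) = -q * e t) (hvτ : ∀ t, v (t + τ) = -q * v t) :
    L1NormLE (fun t => e t + σ * v t)
      ((1 + 2 * √(1 - a * σ + b * σ ^ 2) * exp (-(a * s / 2)) / (1 - q)) / b) := by
  have he := K.continuous_pos
  have hv := K.continuous_vel
  intro T hT
  refine (L1NormLE.of_antiperiodic (K.hasDerivAt_stepResponse hb.ne') (by fun_prop) hs hsτ hq0 hq1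
    hpos hneg (fun t => by rw [heτ, hvτ]; ring) T hT).trans ?_
  have hheight := K.stepResponse_le_of_eq_zero hb
    (le_antisymm (hneg s ⟨le_rfl, hsτ⟩) (hpos s ⟨hs, le_rfl⟩))
  have hend : stepResponse a b σ e v τ = (1 + q) / b := by
    have he0 := heτ 0
    have hv0 := hvτ 0
    rw [zero_add, K.pos_zero] at he0
    rw [zero_add, K.vel_zero] at hv0
    rw [stepResponse, he0, hv0]; ring
  have hq : 0 < 1 - q := sub_pos.2 hq1
  calc _ ≤ (2 * ((1 + √(1 - a * σ + b * σ ^ 2) * exp (-(a * s / 2))) / b) - 0 - (1 + q) / b)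
        / (1 - q) := by
        rw [K.stepResponse_zero, hend]; gcongr
    _ = _ := by field_simp; ring

end IsImpulseResponse

/-! ### Explicit impulse responses -/

lemma tendsto_exp_neg_mul_atTop {c : ℝ} (hc : 0 < c) :
    Tendsto (fun t => exp (-(c * t))) atTop (nhds 0) :=
  tendsto_exp_neg_atTop_nhds_zero.comp (tendsto_id.const_mul_atTop hc)

lemma hasDerivAt_exp_neg_mul (c t : ℝ) :
    HasDerivAt (fun t => exp (-(c * t))) (-c * exp (-(c * t))) t :=
  (hasDerivAt_const_mul c).fun_neg.exp.congr_deriv (by ring)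

section Overdamped

/-- The impulse response of the oscillator with the real poles `-l` and `-m`. -/
def overdampedPos (l m t : ℝ) : ℝ := (exp (-(l * t)) - exp (-(m * t))) / (m - l)

/-- The derivative of `overdampedPos`. -/
def overdampedVel (l m t : ℝ) : ℝ := (m * exp (-(m * t)) - l * exp (-(l * t))) / (m - l)

variable {σ l m : ℝ}

lemma isImpulseResponse_overdamped (hl : 0 < l) (hlm : l < m) :
    IsImpulseResponse (l + m) (l * m) (overdampedPos l m) (overdampedVel l m) := by
  have hsub : m - l ≠ 0 := (sub_pos.2 hlm).ne'
  have hlim_l := tendsto_exp_neg_mul_atTop hl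
  have hlim_m := tendsto_exp_neg_mul_atTop (hl.trans hlm)
  refine ⟨by simp [overdampedPos], by simp [overdampedVel, hsub], fun t => ?_, fun t => ?_, ?_, ?_⟩
  · refine (((hasDerivAt_exp_neg_mul l t).sub
      (hasDerivAt_exp_neg_mul m t)).div_const (m - l)).congr_deriv ?_
    rw [overdampedVel]; ring
  · refine ((((hasDerivAt_exp_neg_mul m t).const_mul m).sub
      ((hasDerivAt_exp_neg_mul l t).const_mul l)).div_const (m - l)).congr_deriv ?_
    rw [overdampedPos, overdampedVel]; field_simp; ring
  · unfold overdampedPos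
    simpa using (hlim_l.sub hlim_m).div_const (m - l)
  · unfold overdampedVel
    simpa using ((hlim_m.const_mul m).sub (hlim_l.const_mul l)).div_const (m - l)

lemma overdampedPos_add_mul_overdampedVel (σ l m t : ℝ) :
    overdampedPos l m t + σ * overdampedVel l m t =
      exp (-(m * t)) / (m - l) * ((σ * m - 1) - (σ * l - 1) * exp ((m - l) * t)) := by
  have hexp : exp (-(l * t)) = exp (-(m * t)) * exp ((m - l) * t) := by
    rw [← exp_add]; congr 1; ring
  rw [overdampedPos, overdampedVel, hexp]; ring

lemma l1NormLE_overdamped_of_le_one (hσ : 0 ≤ σ) (hl : 0 < l) (hlm : l < m) (hσl : σ * l ≤ 1) :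
    L1NormLE (fun t => overdampedPos l m t + σ * overdampedVel l m t) (1 / (l * m)) := by
  have hsub : 0 < m - l := sub_pos.2 hlm
  refine (isImpulseResponse_overdamped hl hlm).l1NormLE_of_nonneg
    (mul_pos hl (hl.trans hlm)).ne' fun t ht => ?_
  rw [overdampedPos_add_mul_overdampedVel]
  refine mul_nonneg (div_pos (exp_pos _) hsub).le ?_
  have hexp : 1 ≤ exp ((m - l) * t) := one_le_exp (by positivity)
  calc 0 ≤ σ * (m - l) + (1 - σ * l) * (exp ((m - l) * t) - 1) :=
        add_nonneg (by positivity) (mul_nonneg (sub_nonneg.2 hσl) (sub_nonneg.2 hexp))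
    _ = _ := by ring

lemma l1NormLE_overdamped_of_one_lt (hl : 0 < l) (hlm : l < m) (hσl : 1 < σ * l) :
    L1NormLE (fun t => overdampedPos l m t + σ * overdampedVel l m t)
      ((1 + 2 * √(1 - (l + m) * σ + l * m * σ ^ 2) *
        (√(1 - (l + m) * σ + l * m * σ ^ 2) / (σ * m - 1)) ^ ((l + m) / (m - l))) / (l * m)) := by
  have hsub : 0 < m - l := sub_pos.2 hlm
  have hL : 0 < σ * l - 1 := sub_pos.2 hσl
  have hσ : 0 < σ := pos_of_mul_pos_left (one_pos.trans hσl) hl.le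
  have hLM : σ * l - 1 ≤ σ * m - 1 := by gcongr
  have hM : 0 < σ * m - 1 := hL.trans_le hLM
  set r := (σ * m - 1) / (σ * l - 1) with hr
  have hr0 : 0 < r := div_pos hM hL
  have hbase : √(1 - (l + m) * σ + l * m * σ ^ 2) / (σ * m - 1) = exp (-(log r / 2)) := by
    rw [exp_neg, exp_half, exp_log hr0, ← sqrt_inv, hr, inv_div, div_eq_iff hM.ne',
      ← sqrt_sq hM.le, ← sqrt_mul (by positivity), sqrt_sq hM.le]
    congr 1; field_simp; ring
  have hpow : (√(1 - (l + m) * σ + l * m * σ ^ 2) / (σ * m - 1)) ^ ((l + m) / (m - l)) =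
      exp (-((l + m) * (log r / (m - l)) / 2)) := by
    rw [hbase, ← exp_mul]; congr 1; ring
  rw [hpow]
  refine (isImpulseResponse_overdamped hl hlm).l1NormLE_of_sign_change
    (mul_pos hl (hl.trans hlm)) (div_nonneg (log_nonneg ((one_le_div hL).2 hLM)) hsub.le)
    (fun t ht => ?_) (fun t ht => ?_) <;> rw [overdampedPos_add_mul_overdampedVel]
  · refine mul_nonneg (by positivity) (sub_nonneg.2 ?_)
    rw [← le_div_iff₀' hL, ← le_log_iff_exp_le hr0, ← le_div_iff₀' hsub]
    exact ht.2
  · refine mul_nonpos_of_nonneg_of_nonpos (by positivity) (sub_nonpos.2 ?_)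
    rw [← div_le_iff₀' hL, ← log_le_iff_le_exp hr0, ← div_le_iff₀' hsub]
    exact ht

end Overdamped

section CriticallyDamped

/-- The impulse response of the oscillator with the double pole `-k`. -/
def criticalPos (k t : ℝ) : ℝ := t * exp (-(k * t))

/-- The derivative of `criticalPos`. -/
def criticalVel (k t : ℝ) : ℝ := (1 - k * t) * exp (-(k * t))

variable {σ k : ℝ}

lemma tendsto_criticalPos (hk : 0 < k) : Tendsto (criticalPos k) atTop (nhds 0) := by
  have hlim := ((tendsto_pow_mul_exp_neg_atTop_nhds_zero 1).comp
    (tendsto_id.const_mul_atTop hk)).const_mul k⁻¹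
  rw [mul_zero] at hlim
  refine hlim.congr fun t => ?_
  simp only [Function.comp_apply, id_eq, pow_one, criticalPos]
  field_simp

lemma isImpulseResponse_critical (hk : 0 < k) :
    IsImpulseResponse (2 * k) (k ^ 2) (criticalPos k) (criticalVel k) := by
  have hlim := tendsto_criticalPos hk
  refine ⟨by simp [criticalPos], by simp [criticalVel], fun t => ?_, fun t => ?_, hlim, ?_⟩
  · refine ((hasDerivAt_id' t).mul (hasDerivAt_exp_neg_mul k t)).congr_deriv ?_
    rw [criticalVel]; ring
  · refine (((hasDerivAt_const_mul k).const_sub 1).mul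
      (hasDerivAt_exp_neg_mul k t)).congr_deriv ?_
    rw [criticalPos, criticalVel]; ring
  · have hvel : criticalVel k = fun t => exp (-(k * t)) - k * criticalPos k t := by
      funext t; rw [criticalPos, criticalVel]; ring
    rw [hvel]
    simpa using (tendsto_exp_neg_mul_atTop hk).sub (hlim.const_mul k)

lemma criticalPos_add_mul_criticalVel (σ k t : ℝ) :
    criticalPos k t + σ * criticalVel k t = exp (-(k * t)) * (σ - (k * σ - 1) * t) := by
  rw [criticalPos, criticalVel]; ring

lemma l1NormLE_critical_of_le_one (hσ : 0 ≤ σ) (hk : 0 < k) (hkσ : k * σ ≤ 1) :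
    L1NormLE (fun t => criticalPos k t + σ * criticalVel k t) (1 / k ^ 2) := by
  refine (isImpulseResponse_critical hk).l1NormLE_of_nonneg (by positivity) fun t ht => ?_
  rw [criticalPos_add_mul_criticalVel]
  have := mul_nonneg (sub_nonneg.2 hkσ) ht
  exact mul_nonneg (exp_pos _).le (by linarith)

lemma l1NormLE_critical_of_one_lt (hk : 0 < k) (hkσ : 1 < k * σ) :
    L1NormLE (fun t => criticalPos k t + σ * criticalVel k t)
      ((1 + 2 * (k * σ - 1) * exp (-1 - 1 / (k * σ - 1))) / k ^ 2) := by
  have hpos : 0 < k * σ - 1 := sub_pos.2 hkσ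
  have hσ : 0 < σ := pos_of_mul_pos_right (one_pos.trans hkσ) hk.le
  have hsqrt : √(1 - 2 * k * σ + k ^ 2 * σ ^ 2) = k * σ - 1 := by
    rw [← sqrt_sq hpos.le]; congr 1; ring
  set s := σ / (k * σ - 1) with hs
  have hexp : -1 - 1 / (k * σ - 1) = -(2 * k * s / 2) := by rw [hs]; field_simp; ring
  rw [hexp, ← hsqrt]
  refine (isImpulseResponse_critical hk).l1NormLE_of_sign_change (by positivity)
    (by positivity : 0 ≤ s) (fun t ht => ?_) (fun t ht => ?_) <;>
    rw [criticalPos_add_mul_criticalVel]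
  · exact mul_nonneg (exp_pos _).le (sub_nonneg.2 ((le_div_iff₀' hpos).1 ht.2))
  · exact mul_nonpos_of_nonneg_of_nonpos (exp_pos _).le
      (sub_nonpos.2 ((div_le_iff₀' hpos).1 ht))

end CriticallyDamped

section Underdamped

/-- The impulse response of the oscillator with the complex poles `-c ± i w`. -/
def underdampedPos (c w t : ℝ) : ℝ := exp (-(c * t)) * (sin (w * t) / w)

/-- The derivative of `underdampedPos`. -/
def underdampedVel (c w t : ℝ) : ℝ := exp (-(c * t)) * (cos (w * t) - c * (sin (w * t) / w))

variable {σ c w R θ : ℝ}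

lemma isImpulseResponse_underdamped (hc : 0 < c) (hw : w ≠ 0) :
    IsImpulseResponse (2 * c) (c ^ 2 + w ^ 2) (underdampedPos c w) (underdampedVel c w) := by
  have hsin (t : ℝ) : HasDerivAt (fun t => sin (w * t) / w) (cos (w * t)) t :=
    ((hasDerivAt_const_mul w).sin.div_const w).congr_deriv (by field_simp)
  have hcos (t : ℝ) : HasDerivAt (fun t => cos (w * t)) (-sin (w * t) * w) t :=
    (hasDerivAt_const_mul w).cos
  have hsin_le (t : ℝ) : |sin (w * t) / w| ≤ 1 / |w| := by
    rw [abs_div]; gcongr; exact abs_sin_le_one _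
  have hdecay {g : ℝ → ℝ} {C : ℝ} (hg : ∀ t, |g t| ≤ C) :
      Tendsto (fun t => exp (-(c * t)) * g t) atTop (nhds 0) :=
    (tendsto_exp_neg_mul_atTop hc).zero_mul_isBoundedUnder_le
      (isBoundedUnder_of ⟨C, hg⟩)
  refine ⟨by simp [underdampedPos], by simp [underdampedVel], fun t => ?_, fun t => ?_,
    hdecay hsin_le, hdecay (C := 1 + |c| * (1 / |w|)) fun t => ?_⟩
  · refine ((hasDerivAt_exp_neg_mul c t).mul (hsin t)).congr_deriv ?_
    rw [underdampedVel]; ring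
  · refine ((hasDerivAt_exp_neg_mul c t).mul
      ((hcos t).sub ((hsin t).const_mul c))).congr_deriv ?_
    simp only [Pi.sub_apply]
    rw [underdampedPos, underdampedVel]; field_simp; ring
  · refine (abs_sub _ _).trans (add_le_add (abs_cos_le_one _) ?_)
    rw [abs_mul]
    exact mul_le_mul_of_nonneg_left (hsin_le t) (abs_nonneg c)

lemma underdampedPos_add_mul_underdampedVel (hw : w ≠ 0) (hcos : 1 - σ * c = R * cos θ)
    (hsin : σ * w = R * sin θ) (t : ℝ) :
    underdampedPos c w t + σ * underdampedVel c w t =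
      exp (-(c * t)) * (R / w) * sin (w * t + θ) := by
  calc _ = exp (-(c * t)) / w * ((1 - σ * c) * sin (w * t) + σ * w * cos (w * t)) := by
        rw [underdampedPos, underdampedVel]; field_simp; ring
    _ = _ := by rw [hcos, hsin, sin_add]; ring

lemma exp_neg_mul_add_half_period (c w t : ℝ) :
    exp (-(c * (t + π / w))) = exp (-(c * (π / w))) * exp (-(c * t)) := by
  rw [← exp_add]; congr 1; ring

lemma underdampedPos_add_half_period (hw : w ≠ 0) (t : ℝ) :
    underdampedPos c w (t + π / w) = -exp (-(c * (π / w))) * underdampedPos c w t := by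
  rw [underdampedPos, underdampedPos, exp_neg_mul_add_half_period, mul_add, mul_div_cancel₀ _ hw,
    sin_add_pi]
  ring

lemma underdampedVel_add_half_period (hw : w ≠ 0) (t : ℝ) :
    underdampedVel c w (t + π / w) = -exp (-(c * (π / w))) * underdampedVel c w t := by
  rw [underdampedVel, underdampedVel, exp_neg_mul_add_half_period, mul_add, mul_div_cancel₀ _ hw,
    sin_add_pi, cos_add_pi]
  ring

lemma exp_neg_div_one_sub_exp_neg (x y : ℝ) :
    exp (-(x - y)) / (1 - exp (-x)) = exp y / (exp x - 1) := by
  rw [neg_sub, sub_eq_add_neg, exp_add, exp_neg]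
  have := exp_ne_zero x
  rw [← mul_div_mul_right _ _ this]
  congr 1 <;> field_simp

lemma l1NormLE_underdamped (hc : 0 < c) (hw : 0 < w) (hR : 0 ≤ R) (hθ : θ ∈ Icc 0 π)
    (hcos : 1 - σ * c = R * cos θ) (hsin : σ * w = R * sin θ) :
    L1NormLE (fun t => underdampedPos c w t + σ * underdampedVel c w t)
      ((1 + 2 * R * exp (c / w * θ) / (exp (c / w * π) - 1)) / (c ^ 2 + w ^ 2)) := by
  have hRsqrt : √(1 - 2 * c * σ + (c ^ 2 + w ^ 2) * σ ^ 2) = R := by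
    rw [← sqrt_sq hR]; congr 1
    calc _ = (1 - σ * c) ^ 2 + (σ * w) ^ 2 := by ring
      _ = R ^ 2 * (sin θ ^ 2 + cos θ ^ 2) := by rw [hcos, hsin]; ring
      _ = R ^ 2 := by rw [sin_sq_add_cos_sq, mul_one]
  have hexp : exp (c / w * θ) / (exp (c / w * π) - 1) =
      exp (-(2 * c * ((π - θ) / w) / 2)) / (1 - exp (-(c * (π / w)))) := by
    rw [← exp_neg_div_one_sub_exp_neg]; congr 3 <;> ring
  rw [mul_div_assoc, hexp, ← mul_div_assoc, ← hRsqrt]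
  refine (isImpulseResponse_underdamped hc hw.ne').l1NormLE_of_antiperiodic (by positivity)
    (div_nonneg (sub_nonneg.2 hθ.2) hw.le) (by gcongr; linarith [hθ.1]) (exp_pos _).le
    (exp_lt_one_iff.2 (neg_lt_zero.2 (by positivity))) (fun t ht => ?_) (fun t ht => ?_)
    (underdampedPos_add_half_period hw.ne') (underdampedVel_add_half_period hw.ne') <;>
    rw [underdampedPos_add_mul_underdampedVel hw.ne' hcos hsin]
  · have htop := (le_div_iff₀' hw).1 ht.2
    refine mul_nonneg (by positivity) (sin_nonneg_of_nonneg_of_le_pi ?_ (by linarith))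
    exact add_nonneg (mul_nonneg hw.le ht.1) hθ.1
  · have hbot := (div_le_iff₀' hw).1 ht.1
    have htop := (le_div_iff₀' hw).1 ht.2
    refine mul_nonpos_of_nonneg_of_nonpos (by positivity) ?_
    rw [← neg_nonneg, ← sin_sub_pi]
    exact sin_nonneg_of_nonneg_of_le_pi (by linarith) (by linarith [hθ.2])

end Underdamped

/-! ### The coefficients `A_n` and the constant `G` -/

/-- The `L¹` gain `k² ‖e + σ v‖₁` of the `n`-th mode, normalised by the static gain: `A_n` if
`μσ < 1`, and `1` otherwise. -/
def modeGain (σ μ : ℝ) (n : ℕ) : ℝ := if 1 ≤ μ * σ then 1 else Acoef σ μ n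

lemma exists_real_poles {a b : ℝ} (ha : 0 < a) (hb : 0 < b) (hab : 4 * b < a ^ 2) :
    ∃ l m, 0 < l ∧ l < m ∧ l + m = a ∧ l * m = b := by
  have hdisc : 0 < a ^ 2 - 4 * b := sub_pos.2 hab
  have hsq : √(a ^ 2 - 4 * b) ^ 2 = a ^ 2 - 4 * b := sq_sqrt hdisc.le
  have hpos : 0 < √(a ^ 2 - 4 * b) := sqrt_pos.2 hdisc
  have hlt : √(a ^ 2 - 4 * b) < a := (sqrt_lt' ha).2 (by linarith)
  exact ⟨(a - √(a ^ 2 - 4 * b)) / 2, (a + √(a ^ 2 - 4 * b)) / 2, by linarith, by linarith, by ring,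
    by linear_combination -hsq / 4⟩

lemma eq_mul_cos_arccos_and_sin_arccos {x y R : ℝ} (hR : 0 < R) (hy : 0 ≤ y)
    (h : x ^ 2 + y ^ 2 = R ^ 2) :
    x = R * cos (arccos (x / R)) ∧ y = R * sin (arccos (x / R)) := by
  have hx : |x| ≤ R := abs_le_of_sq_le_sq (by linarith [sq_nonneg y]) hR.le
  constructor
  · rw [cos_arccos ((le_div_iff₀ hR).2 (by linarith [neg_abs_le x]))
      ((div_le_one hR).2 ((le_abs_self x).trans hx)), mul_div_cancel₀ _ hR.ne']
  · have hy_sq : 1 - (x / R) ^ 2 = (y / R) ^ 2 := by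
      field_simp; linarith
    rw [sin_arccos, hy_sq, sqrt_sq (by positivity), mul_div_cancel₀ _ hR.ne']

section Coefficients

variable {σ μ l m c w : ℝ} {n : ℕ}

lemma Acoef_of_real_poles (hl : 0 < l) (hlm : l < m) (hsum : l + m = μ + (n * π) ^ 2 * σ)
    (hprod : l * m = (n * π) ^ 2) :
    Acoef σ μ n = if 1 ≤ n * π * σ then
      1 + 2 * √(1 - μ * σ) * (√(1 - μ * σ) / (σ * m - 1)) ^ ((l + m) / (m - l)) else 1 := by
  have hsub : 0 < m - l := sub_pos.2 hlm
  have ha : μ + (n : ℝ) ^ 2 * π ^ 2 * σ = l + m := by rw [hsum]; ring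
  have hsqrt : √((l + m) ^ 2 - 4 * (n : ℝ) ^ 2 * π ^ 2) = m - l := by
    rw [← sqrt_sq hsub.le]; congr 1; linear_combination 4 * hprod
  have hlt : 2 * n * π < l + m := lt_of_pow_lt_pow_left₀ 2 (by linarith) <| by
    linarith [pow_pos hsub 2, show (2 * n * π) ^ 2 = (l + m) ^ 2 - (m - l) ^ 2 by
      linear_combination -4 * hprod]
  have hbase : 2 * ((l + m) / (m - l)) * √(1 - μ * σ) /
      (σ * (l + m) * (1 + (l + m) / (m - l)) - 2 * ((l + m) / (m - l))) =
      √(1 - μ * σ) / (σ * m - 1) := by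
    have hne : 2 * ((l + m) / (m - l)) ≠ 0 :=
      mul_ne_zero two_ne_zero (div_pos (by linarith) hsub).ne'
    rw [← mul_div_mul_left _ (σ * m - 1) hne]
    congr 1; field_simp; ring
  rw [Acoef, ha, hsqrt, if_pos hlt, hbase]

lemma Acoef_of_double_pole (h : 2 * (n * π) = μ + (n * π) ^ 2 * σ) :
    Acoef σ μ n = if n * π * σ = 1 + √(1 - μ * σ) then
      1 + 2 * √(1 - μ * σ) * exp (-1 - 1 / √(1 - μ * σ)) else 1 := by
  have ha : μ + (n : ℝ) ^ 2 * π ^ 2 * σ = 2 * n * π := by linear_combination -h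
  rw [Acoef, if_neg ha.not_gt, if_pos ha]

lemma Acoef_of_complex_poles (hw : 0 < w) (hsum : 2 * c = μ + (n * π) ^ 2 * σ)
    (hprod : c ^ 2 + w ^ 2 = (n * π) ^ 2) :
    Acoef σ μ n = 1 + 2 * √(1 - μ * σ) * exp (c / w * arccos ((1 - σ * c) / √(1 - μ * σ))) /
      (exp (c / w * π) - 1) := by
  have ha : μ + (n : ℝ) ^ 2 * π ^ 2 * σ = 2 * c := by rw [hsum]; ring
  have hlt : 2 * c < 2 * n * π := by
    have : c < n * π := lt_of_pow_lt_pow_left₀ 2 (by positivity) (by linarith [pow_pos hw 2])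
    linarith
  have hsqrt : √(4 * (n : ℝ) ^ 2 * π ^ 2 - (2 * c) ^ 2) = 2 * w := by
    rw [← sqrt_sq (by positivity : 0 ≤ 2 * w)]; congr 1; linear_combination -4 * hprod
  have hcos : 2 - σ * μ - (n : ℝ) ^ 2 * π ^ 2 * σ ^ 2 = 2 * (1 - σ * c) := by
    linear_combination σ * hsum
  rw [Acoef, ha, if_neg hlt.not_gt, if_neg hlt.ne, hsqrt, hcos, mul_comm σ μ,
    mul_div_mul_left _ _ two_ne_zero, mul_div_mul_left _ _ two_ne_zero,
    mul_div_right_comm (2 * c) π, mul_div_mul_left _ _ two_ne_zero]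

lemma exists_impulseResponse_of_real_poles (hσ : 0 < σ) (hl : 0 < l) (hlm : l < m)
    (hsum : l + m = μ + (n * π) ^ 2 * σ) (hprod : l * m = (n * π) ^ 2) :
    ∃ e v, IsImpulseResponse (l + m) (l * m) e v ∧
      L1NormLE (fun t => e t + σ * v t) (modeGain σ μ n / (l * m)) := by
  refine ⟨_, _, isImpulseResponse_overdamped hl hlm, ?_⟩
  have hρ : (σ * l - 1) * (σ * m - 1) = 1 - μ * σ := by
    linear_combination σ ^ 2 * hprod - σ * hsum
  have hsq : σ * l * (σ * m) = (n * π * σ) ^ 2 := by linear_combination σ ^ 2 * hprod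
  have hσlm : σ * l < σ * m := by gcongr
  have hσl : 0 < σ * l := mul_pos hσ hl
  rcases lt_or_ge 1 (σ * l) with hgt | hle
  · have hμσ : μ * σ < 1 :=
      sub_pos.1 (hρ ▸ mul_pos (sub_pos.2 hgt) (sub_pos.2 (hgt.trans hσlm)))
    have hkσ : 1 ≤ n * π * σ := (one_le_sq_iff₀ (by positivity)).1 <|
      hsq ▸ one_le_mul_of_one_le_of_one_le hgt.le (hgt.trans hσlm).le
    have hρ' : 1 - (l + m) * σ + l * m * σ ^ 2 = 1 - μ * σ := by rw [← hρ]; ring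
    rw [modeGain, if_neg hμσ.not_ge, Acoef_of_real_poles hl hlm hsum hprod, if_pos hkσ, ← hρ']
    exact l1NormLE_overdamped_of_one_lt hl hlm hgt
  · have hgain : modeGain σ μ n = 1 := by
      rw [modeGain, ite_eq_left_iff, not_le]
      intro hμσ
      have hσm : σ * m < 1 := by
        by_contra! hge
        linarith [mul_nonneg (sub_nonneg.2 hle) (sub_nonneg.2 hge)]
      have hkσ : n * π * σ < 1 := by
        refine lt_of_pow_lt_pow_left₀ 2 zero_le_one ?_
        rw [← hsq, one_pow]
        exact mul_lt_one_of_nonneg_of_lt_one_left hσl.le (hσlm.trans hσm) hσm.le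
      rw [Acoef_of_real_poles hl hlm hsum hprod, if_neg hkσ.not_ge]
    rw [hgain]
    exact l1NormLE_overdamped_of_le_one hσ.le hl hlm hle

lemma exists_impulseResponse_of_double_pole (hσ : 0 < σ) (hn : 0 < n)
    (h : 2 * (n * π) = μ + (n * π) ^ 2 * σ) :
    ∃ e v, IsImpulseResponse (2 * (n * π)) ((n * π) ^ 2) e v ∧
      L1NormLE (fun t => e t + σ * v t) (modeGain σ μ n / (n * π) ^ 2) := by
  have hk : 0 < n * π := by positivity
  refine ⟨_, _, isImpulseResponse_critical hk, ?_⟩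
  have hρ : 1 - μ * σ = (n * π * σ - 1) ^ 2 := by linear_combination σ * h
  rcases lt_or_ge 1 (n * π * σ) with hgt | hle
  · have hsqrt : √(1 - μ * σ) = n * π * σ - 1 := by rw [hρ, sqrt_sq (sub_pos.2 hgt).le]
    have hμσ : μ * σ < 1 := sub_pos.1 (hρ ▸ pow_pos (sub_pos.2 hgt) 2)
    rw [modeGain, if_neg hμσ.not_ge, Acoef_of_double_pole h, hsqrt, if_pos (by ring)]
    exact l1NormLE_critical_of_one_lt hk hgt
  · have hgain : modeGain σ μ n = 1 := by
      rw [modeGain, ite_eq_left_iff, not_le]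
      intro hμσ
      have hsqrt : 0 < √(1 - μ * σ) := sqrt_pos.2 (sub_pos.2 hμσ)
      rw [Acoef_of_double_pole h, if_neg (by linarith)]
    rw [hgain]
    exact l1NormLE_critical_of_le_one hσ.le hk hle

lemma exists_impulseResponse_of_complex_poles (hσ : 0 < σ) (hc : 0 < c) (hw : 0 < w)
    (hsum : 2 * c = μ + (n * π) ^ 2 * σ) (hprod : c ^ 2 + w ^ 2 = (n * π) ^ 2) :
    ∃ e v, IsImpulseResponse (2 * c) (c ^ 2 + w ^ 2) e v ∧
      L1NormLE (fun t => e t + σ * v t) (modeGain σ μ n / (c ^ 2 + w ^ 2)) := by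
  refine ⟨_, _, isImpulseResponse_underdamped hc hw.ne', ?_⟩
  have hρ : (1 - σ * c) ^ 2 + (σ * w) ^ 2 = 1 - μ * σ := by
    linear_combination σ ^ 2 * hprod - σ * hsum
  have hμσ : 0 < 1 - μ * σ := by rw [← hρ]; positivity
  obtain ⟨hcos, hsin⟩ := eq_mul_cos_arccos_and_sin_arccos (sqrt_pos.2 hμσ) (mul_pos hσ hw).le
    (hρ.trans (sq_sqrt hμσ.le).symm)
  rw [modeGain, if_neg (sub_pos.1 hμσ).not_ge, Acoef_of_complex_poles hw hsum hprod]
  exact l1NormLE_underdamped hc hw (sqrt_nonneg _) ⟨arccos_nonneg _, arccos_le_pi _⟩ hcos hsin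

lemma exists_impulseResponse (hσ : 0 < σ) (hn : 0 < n) (ha : 0 < μ + (n * π) ^ 2 * σ) :
    ∃ e v, IsImpulseResponse (μ + (n * π) ^ 2 * σ) ((n * π) ^ 2) e v ∧
      L1NormLE (fun t => e t + σ * v t) (modeGain σ μ n / (n * π) ^ 2) := by
  have hk : 0 < n * π := by positivity
  set a := μ + (n * π) ^ 2 * σ
  rcases lt_trichotomy (2 * (n * π)) a with hlt | heq | hgt
  · obtain ⟨l, m, hl, hlm, hsum, hprod⟩ := exists_real_poles ha (pow_pos hk 2)
      (by linarith [pow_lt_pow_left₀ hlt (by positivity) two_ne_zero])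
    rw [← hsum, ← hprod]
    exact exists_impulseResponse_of_real_poles hσ hl hlm hsum hprod
  · rw [← heq]
    exact exists_impulseResponse_of_double_pole hσ hn heq
  · have hdisc : 0 < (n * π) ^ 2 - (a / 2) ^ 2 :=
      sub_pos.2 (pow_lt_pow_left₀ (by linarith) (by positivity) two_ne_zero)
    have hsum : 2 * (a / 2) = a := by ring
    have hprod : (a / 2) ^ 2 + √((n * π) ^ 2 - (a / 2) ^ 2) ^ 2 = (n * π) ^ 2 := by
      rw [sq_sqrt hdisc.le]; ring
    have hfinal := exists_impulseResponse_of_complex_poles hσ (half_pos ha) (sqrt_pos.2 hdisc) hsum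
      hprod
    rwa [hprod, hsum] at hfinal

lemma one_le_Acoef_and_le_of_real_poles (hσ : 0 < σ) (hl : 0 < l) (hlm : l < m)
    (hsum : l + m = μ + (n * π) ^ 2 * σ) (hprod : l * m = (n * π) ^ 2) :
    1 ≤ Acoef σ μ n ∧ Acoef σ μ n ≤ 1 + 2 * √(1 - μ * σ) := by
  rw [Acoef_of_real_poles hl hlm hsum hprod]
  split_ifs with hkσ
  swap
  · exact ⟨le_rfl, le_add_of_nonneg_right (by positivity)⟩
  have hσlm : σ * l < σ * m := by gcongr
  have hσm : 1 < σ * m := by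
    by_contra! hle
    have hσl : σ * l < 1 := hσlm.trans_le hle
    have hsq : σ * l * (σ * m) = (n * π * σ) ^ 2 := by linear_combination σ ^ 2 * hprod
    have hlt := mul_lt_one_of_nonneg_of_lt_one_left (mul_pos hσ hl).le hσl hle
    rw [hsq] at hlt
    exact hlt.not_ge (one_le_pow₀ hkσ)
  have hρ : 1 - μ * σ ≤ (σ * m - 1) ^ 2 :=
    calc 1 - μ * σ = (σ * l - 1) * (σ * m - 1) := by linear_combination σ * hsum - σ ^ 2 * hprod
      _ ≤ (σ * m - 1) ^ 2 := by rw [sq]; gcongr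
  have hbase : √(1 - μ * σ) / (σ * m - 1) ≤ 1 :=
    div_le_one_of_le₀ ((sqrt_le_left (sub_pos.2 hσm).le).2 hρ) (sub_pos.2 hσm).le
  have hbase0 : 0 ≤ √(1 - μ * σ) / (σ * m - 1) := div_nonneg (sqrt_nonneg _) (sub_pos.2 hσm).le
  constructor
  · exact le_add_of_nonneg_right (mul_nonneg (by positivity) (rpow_nonneg hbase0 _))
  · exact add_le_add le_rfl <| mul_le_of_le_one_right (by positivity) <|
      rpow_le_one hbase0 hbase (div_nonneg (by linarith) (by linarith))

lemma eventually_one_le_modeGain_and_le (hσ : 0 < σ) :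
    ∀ᶠ n in atTop, 1 ≤ modeGain σ μ n ∧ modeGain σ μ n ≤ 1 + 2 * √(1 - μ * σ) := by
  have hk : Tendsto (fun n : ℕ => n * π) atTop atTop :=
    tendsto_natCast_atTop_atTop.atTop_mul_const pi_pos
  filter_upwards [hk.eventually_ge_atTop (3 / σ), hk.eventually_gt_atTop (-μ),
    eventually_gt_atTop 0] with n hkσ hkμ hn
  rw [modeGain]
  split_ifs with hμσ
  · exact ⟨le_rfl, le_add_of_nonneg_right (by positivity)⟩
  have hk0 : 0 < n * π := by positivity
  have hover : 2 * (n * π) < μ + (n * π) ^ 2 * σ := by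
    have := mul_le_mul_of_nonneg_left ((div_le_iff₀ hσ).1 hkσ) hk0.le
    linarith
  obtain ⟨l, m, hl, hlm, hsum, hprod⟩ := exists_real_poles
    ((mul_pos two_pos hk0).trans hover) (pow_pos hk0 2)
    (by linarith [pow_lt_pow_left₀ hover (by positivity) two_ne_zero])
  exact one_le_Acoef_and_le_of_real_poles hσ hl hlm hsum hprod

lemma summable_sq_div_nat_mul_pi (C : ℝ) :
    Summable fun n : ℕ => (C / ((n + 1 : ℕ) * π)) ^ 2 := by
  have hsum : Summable fun n : ℕ => (C / π) ^ 2 * (1 / ((n + 1 : ℕ) : ℝ) ^ 2) :=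
    ((summable_nat_add_iff 1).2 (summable_one_div_nat_pow.2 one_lt_two)).mul_left _
  exact hsum.congr fun n => by field_simp

lemma summable_modeGain (hσ : 0 < σ) (μ : ℝ) :
    Summable fun n : ℕ => (√2 * modeGain σ μ (n + 1) / ((n + 1 : ℕ) * π)) ^ 2 := by
  refine (summable_sq_div_nat_mul_pi
    (√2 * (1 + 2 * √(1 - μ * σ)))).of_norm_bounded_eventually_nat ?_
  filter_upwards [(tendsto_add_atTop_nat 1).eventually (eventually_one_le_modeGain_and_le hσ)]
    with n hn
  have hnonneg : 0 ≤ modeGain σ μ (n + 1) := zero_le_one.trans hn.1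
  rw [norm_of_nonneg (sq_nonneg _)]
  gcongr
  exact hn.2

lemma Gconst_eq_sqrt_tsum (σ μ : ℝ) :
    Gconst μ σ = √(∑' n : ℕ, (√2 * modeGain σ μ (n + 1) / ((n + 1 : ℕ) * π)) ^ 2) := by
  have hterm (n : ℕ) : (√2 * modeGain σ μ (n + 1) / ((n + 1 : ℕ) * π)) ^ 2 =
      (1 / π) ^ 2 * (2 * (modeGain σ μ (n + 1) ^ 2 / ((n : ℝ) + 1) ^ 2)) := by
    rw [div_pow, mul_pow, mul_pow, sq_sqrt zero_le_two]
    push_cast; field_simp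
  simp_rw [hterm, tsum_mul_left, modeGain, Gconst]
  split_ifs
  · have hzeta : ∑' n : ℕ, (1 : ℝ) ^ 2 / ((n : ℝ) + 1) ^ 2 = π ^ 2 / 6 := by
      have hsum := (hasSum_nat_add_iff' 1).2 hasSum_zeta_two
      simpa using hsum.tsum_eq
    rw [hzeta, ← sqrt_one, ← sqrt_div zero_le_one]
    congr 1; field_simp; norm_num
  · rw [sqrt_mul (sq_nonneg (1 / π)), sqrt_sq (by positivity)]

end Coefficients

/-! ### Parseval's identity for the sine basis -/

section Parseval

variable {f : ℝ → ℝ}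

/-- The odd function that agrees with `f` on `(0, ∞)`. Its value at `0` is `-f 0`, which is harmless
since only integrals of it are used. -/
def oddExt (f : ℝ → ℝ) (x : ℝ) : ℝ := if 0 < x then f x else -f (-x)

/-- The coefficient of `f` with respect to `√2 sin (k x)`, which for `k = nπ` is a member of the
orthonormal sine basis of `L²(0, 1)`. -/
def sineCoeff (f : ℝ → ℝ) (k : ℝ) : ℝ := ∫ x in 0..1, f x * (√2 * sin (k * x))

lemma oddExt_of_pos {x : ℝ} (hx : 0 < x) : oddExt f x = f x := if_pos hx

lemma oddExt_of_nonpos {x : ℝ} (hx : x ≤ 0) : oddExt f x = -f (-x) := if_neg hx.not_gt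

lemma integral_comp_oddExt {E : Type*} [NormedAddCommGroup E] [NormedSpace ℝ E] {G : ℝ → ℝ → E}
    (hf : Continuous f) (hG : Continuous (Function.uncurry G)) {c : ℝ} (hc : 0 ≤ c) :
    ∫ x in -c..c, G x (oddExt f x) = ∫ x in 0..c, (G (-x) (-f x) + G x (f x)) := by
  have hpos : EqOn (fun x => G x (f x)) (fun x => G x (oddExt f x)) (uIoo 0 c) := fun x hx => by
    rw [uIoo_of_le hc] at hx
    simp only [oddExt_of_pos hx.1]
  have hneg : EqOn (fun x => G x (-f (-x))) (fun x => G x (oddExt f x)) (uIoo (-c) 0) :=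
    fun x hx => by
      rw [uIoo_of_le (neg_nonpos.2 hc)] at hx
      simp only [oddExt_of_nonpos hx.2.le]
  have cpos : Continuous fun x => G x (f x) := hG.comp (continuous_id.prodMk hf)
  have cneg : Continuous fun x => G x (-f (-x)) :=
    hG.comp (continuous_id.prodMk (hf.comp continuous_neg).neg)
  have hflip : ∫ x in -c..0, G x (-f (-x)) = ∫ x in 0..c, G (-x) (-f x) := by
    simpa only [neg_neg, neg_zero] using
      (intervalIntegral.integral_comp_neg (a := 0) (b := c) fun x => G x (-f (-x))).symm
  rw [← integral_add_adjacent_intervals ((cneg.intervalIntegrable _ _).congr_uIoo hneg)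
      ((cpos.intervalIntegrable _ _).congr_uIoo hpos), ← integral_congr_uIoo hneg,
    ← integral_congr_uIoo hpos, hflip,
    intervalIntegral.integral_add _ (cpos.intervalIntegrable _ _)]
  exact (hG.comp (continuous_neg.prodMk hf.neg)).intervalIntegrable _ _

lemma memLp_oddExt (hf : Continuous f) (c : ℝ) (p : ENNReal) :
    MemLp (fun x => (oddExt f x : ℂ)) p (volume.restrict (Ioc (-c) c)) := by
  have hmeas : Measurable (oddExt f) :=
    Measurable.ite measurableSet_Ioi hf.measurable (hf.comp continuous_neg).neg.measurable
  obtain ⟨C, hC⟩ := (isCompact_Icc (a := -c) (b := c)).exists_bound_of_continuousOn hf.continuousOn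
  refine MemLp.of_bound (Complex.measurable_ofReal.comp hmeas).aestronglyMeasurable C ?_
  filter_upwards [ae_restrict_mem measurableSet_Ioc] with x hx
  rw [Complex.norm_real]
  rcases lt_or_ge 0 x with hx0 | hx0
  · rw [oddExt_of_pos hx0]
    exact hC x (Ioc_subset_Icc_self hx)
  · rw [oddExt_of_nonpos hx0, norm_neg]
    exact hC (-x) ⟨neg_le_neg hx.2, neg_le.1 hx.1.le⟩

lemma fourierCoeffOn_oddExt (hf : Continuous f) (n : ℤ) :
    fourierCoeffOn (show (-1 : ℝ) < 1 by norm_num) (fun x => (oddExt f x : ℂ)) n =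
      -Complex.I / √2 * sineCoeff f (n * π) := by
  have hsqrt : (√2 : ℂ) ≠ 0 := by simp
  have hexp (x : ℝ) : ((fourier (-n) : AddCircle (1 - (-1 : ℝ)) → ℂ) (-x : ℝ) * ((-f x : ℝ) : ℂ) +
      (fourier (-n) : AddCircle (1 - (-1 : ℝ)) → ℂ) x * f x) =
      -2 * Complex.I / √2 * ((f x * (√2 * sin (n * π * x)) : ℝ) : ℂ) := by
    have hneg : 2 * (π : ℂ) * Complex.I * (-n) * x / (1 - -1) = -(n * π * x) * Complex.I := by ring
    have hpos : 2 * (π : ℂ) * Complex.I * (-n) * -x / (1 - -1) = n * π * x * Complex.I := by ring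
    simp only [fourier_coe_apply]
    push_cast
    rw [hneg, hpos, Complex.sin]
    field_simp
    linear_combination f x * (Complex.exp (-(n * π * x * Complex.I))
      - Complex.exp (n * π * x * Complex.I)) * Complex.I_sq
  rw [fourierCoeffOn_eq_integral]
  simp only [smul_eq_mul]
  rw [integral_comp_oddExt hf (G := fun x y =>
      (fourier (-n) : AddCircle (1 - (-1 : ℝ)) → ℂ) x * (y : ℂ)) (by fun_prop) zero_le_one]
  simp_rw [hexp]
  rw [intervalIntegral.integral_const_mul, intervalIntegral.integral_ofReal, Complex.real_smul,
    sineCoeff]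
  push_cast
  ring

lemma hasSum_sq_sineCoeff (hf : Continuous f) :
    HasSum (fun n : ℕ => sineCoeff f ((n + 1 : ℕ) * π) ^ 2) (∫ x in 0..1, f x ^ 2) := by
  have hparseval := hasSum_sq_fourierCoeffOn (show (-1 : ℝ) < 1 by norm_num) (memLp_oddExt hf 1 2)
  have hnorm : (1 - (-1 : ℝ))⁻¹ • ∫ x in -1..1, ‖(oddExt f x : ℂ)‖ ^ 2 = ∫ x in 0..1, f x ^ 2 := by
    rw [integral_comp_oddExt hf (G := fun _ y => ‖(y : ℂ)‖ ^ 2) (by fun_prop) zero_le_one]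
    simp_rw [Complex.norm_real, norm_neg, norm_eq_abs, sq_abs, ← two_mul]
    rw [intervalIntegral.integral_const_mul, smul_eq_mul]
    ring
  have hterm (n : ℤ) :
      ‖-Complex.I / √2 * sineCoeff f (n * π)‖ ^ 2 = sineCoeff f (n * π) ^ 2 / 2 := by
    rw [norm_mul, norm_div, norm_neg, Complex.norm_I, Complex.norm_real, Complex.norm_real, mul_pow,
      div_pow, norm_eq_abs, norm_eq_abs, sq_abs, sq_abs, sq_sqrt zero_le_two]
    ring
  simp_rw [fourierCoeffOn_oddExt hf, hterm, hnorm] at hparseval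
  have hneg (k : ℝ) : sineCoeff f (-k) = -sineCoeff f k := by
    simp only [sineCoeff, neg_mul, sin_neg, mul_neg, intervalIntegral.integral_neg]
  have hzero : sineCoeff f 0 = 0 := by
    simp only [sineCoeff, zero_mul, sin_zero, mul_zero, intervalIntegral.integral_zero]
  have hfold := (hasSum_nat_add_iff' 1).2 hparseval.nat_add_neg
  simpa only [Int.cast_neg, Int.cast_natCast, neg_mul, hneg, neg_sq, add_halves,
    Finset.sum_range_one, Int.cast_zero, Nat.cast_zero, neg_zero, zero_mul, hzero,
    zero_pow two_ne_zero, zero_div, sub_zero, add_zero] using hfold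

lemma intervalIntegrable_mul_sine (hf : Continuous f) (k : ℝ) :
    IntervalIntegrable (fun x => f x * (√2 * sin (k * x))) volume 0 1 :=
  (hf.mul (by fun_prop)).intervalIntegrable _ _

lemma sineCoeff_add {g : ℝ → ℝ} (hf : Continuous f) (hg : Continuous g) (k : ℝ) :
    sineCoeff (fun x => f x + g x) k = sineCoeff f k + sineCoeff g k := by
  simp only [sineCoeff, add_mul]
  exact intervalIntegral.integral_add (intervalIntegrable_mul_sine hf k)
    (intervalIntegrable_mul_sine hg k)

lemma sineCoeff_const_mul (c : ℝ) (f : ℝ → ℝ) (k : ℝ) :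
    sineCoeff (fun x => c * f x) k = c * sineCoeff f k := by
  simp only [sineCoeff, mul_assoc, intervalIntegral.integral_const_mul]

lemma abs_sineCoeff_le (hf : Continuous f) (k : ℝ) :
    |sineCoeff f k| ≤ √2 * ∫ x in 0..1, |f x| := by
  rw [← intervalIntegral.integral_const_mul]
  refine (abs_integral_le_integral_abs zero_le_one).trans (integral_mono_on zero_le_one
    (intervalIntegrable_mul_sine hf k).abs (hf.abs.const_mul √2 |>.intervalIntegrable _ _)
    fun x _ => ?_)
  rw [abs_mul, abs_mul, abs_of_nonneg (sqrt_nonneg 2), mul_comm]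
  exact mul_le_mul_of_nonneg_right
    (mul_le_of_le_one_right (sqrt_nonneg 2) (abs_sin_le_one _)) (abs_nonneg _)

end Parseval

/-! ### The equation of a mode -/

lemma hasDerivAt_integral_of_continuous {F F' : ℝ → ℝ → ℝ} {a b t : ℝ}
    (hF : ∀ s, Continuous (F s)) (hF' : Continuous (Function.uncurry F'))
    (h : ∀ s x, HasDerivAt (fun r => F r x) (F' s x) s) :
    HasDerivAt (fun s => ∫ x in a..b, F s x) (∫ x in a..b, F' t x) t := by
  obtain ⟨C, hC⟩ := (isCompact_Icc.prod isCompact_uIcc).exists_bound_of_continuousOn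
    (s := Icc (t - 1) (t + 1) ×ˢ uIcc a b) hF'.continuousOn
  refine (hasDerivAt_integral_of_dominated_loc_of_deriv_le (bound := fun _ => C)
    (Icc_mem_nhds (sub_one_lt t) (lt_add_one t))
    (Eventually.of_forall fun s => (hF s).aestronglyMeasurable) ((hF t).intervalIntegrable _ _)
    (hF'.comp (Continuous.prodMk_right t)).aestronglyMeasurable
    (Eventually.of_forall fun x hx s hs => hC (s, x) ⟨hs, uIoc_subset_uIcc hx⟩)
    intervalIntegrable_const (Eventually.of_forall fun x _ s _ => h s x)).2

section TimeDerivative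

variable {u : ℝ → ℝ → ℝ}

lemma hasDerivAt_u_t (hu : ContDiff ℝ 1 (Function.uncurry u)) (t x : ℝ) :
    HasDerivAt (fun s => u s x) (u_t u t x) t :=
  ((hu.differentiable one_ne_zero).comp
    (differentiable_id.prodMk (differentiable_const x))).differentiableAt.hasDerivAt

lemma contDiff_u_t {m : ℕ} (hu : ContDiff ℝ (m + 1) (Function.uncurry u)) :
    ContDiff ℝ m (Function.uncurry (u_t u)) := by
  have hpartial : Function.uncurry (u_t u) =
      fun p => fderiv ℝ (Function.uncurry u) p ((1 : ℝ), (0 : ℝ)) := by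
    ext ⟨t, x⟩
    exact ((hu.differentiable (by simp) (t, x)).hasFDerivAt.comp_hasDerivAt t
      ((hasDerivAt_id t).prodMk (hasDerivAt_const t x))).deriv
  rw [hpartial]
  exact (hu.fderiv_right le_rfl).clm_apply contDiff_const

lemma hasDerivAt_sineCoeff (hu : ContDiff ℝ 1 (Function.uncurry u)) (k t : ℝ) :
    HasDerivAt (fun s => sineCoeff (u s) k) (sineCoeff (u_t u t) k) t := by
  have hcont : Continuous (Function.uncurry (u_t u)) :=
    (contDiff_u_t (m := 0) (by simpa)).continuous
  refine hasDerivAt_integral_of_continuous (F' := fun s x => u_t u s x * (√2 * sin (k * x)))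
    (fun s => ?_) ?_ fun s x => (hasDerivAt_u_t hu s x).mul_const _
  · exact (hu.continuous.comp (Continuous.prodMk_right s)).mul (by fun_prop)
  · exact hcont.mul (by fun_prop)

end TimeDerivative

lemma continuous_deriv_deriv {f : ℝ → ℝ} (hf : ContDiff ℝ 2 f) : Continuous (deriv (deriv f)) :=
  ((contDiff_succ_iff_deriv (n := 1)).1 hf).2.2.continuous_deriv le_rfl

lemma sineCoeff_deriv_deriv {f : ℝ → ℝ} (hf : ContDiff ℝ 2 f) {k : ℝ} (hk : sin k = 0)
    (h1 : f 1 = 0) : sineCoeff (deriv (deriv f)) k = √2 * k * f 0 - k ^ 2 * sineCoeff f k := by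
  have hf1 : ContDiff ℝ 1 (deriv f) := ((contDiff_succ_iff_deriv (n := 1)).1 hf).2.2
  have hcont : Continuous fun x => k ^ 2 * f x := hf.continuous.const_mul _
  have hprim (x : ℝ) : HasDerivAt
      (fun x => √2 * (deriv f x * sin (k * x) - k * (f x * cos (k * x))))
      ((deriv (deriv f) x + k ^ 2 * f x) * (√2 * sin (k * x))) x := by
    have hlin : HasDerivAt (fun x => k * x) k x := by simpa using (hasDerivAt_id x).const_mul k
    have hd1 : HasDerivAt f (deriv f x) x := (hf.differentiable two_ne_zero x).hasDerivAt
    have hd2 : HasDerivAt (deriv f) (deriv (deriv f) x) x :=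
      (hf1.differentiable one_ne_zero x).hasDerivAt
    refine (((hd2.mul hlin.sin).sub ((hd1.mul hlin.cos).const_mul k)).const_mul √2).congr_deriv ?_
    ring
  have hftc : sineCoeff (fun x => deriv (deriv f) x + k ^ 2 * f x) k = √2 * k * f 0 := by
    refine (integral_eq_sub_of_hasDerivAt (fun x _ => hprim x)
      (intervalIntegrable_mul_sine ((continuous_deriv_deriv hf).add hcont) k)).trans ?_
    simp only [mul_one, mul_zero, hk, h1, sin_zero, cos_zero, zero_mul, sub_zero, zero_sub]
    ring
  rw [sineCoeff_add (continuous_deriv_deriv hf) hcont, sineCoeff_const_mul] at hftc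
  exact eq_sub_of_add_eq hftc

namespace IsClassicalSolution

variable {σ μ : ℝ} {d : ℝ → ℝ} {u : ℝ → ℝ → ℝ}

lemma contDiff_uncurry (hu : IsClassicalSolution σ μ d u) : ContDiff ℝ 1 (Function.uncurry u) :=
  hu.1.of_le one_le_two

lemma contDiff_uncurry_u_t (hu : IsClassicalSolution σ μ d u) :
    ContDiff ℝ 1 (Function.uncurry (u_t u)) :=
  contDiff_u_t (m := 1) (by simpa only [Nat.cast_one, one_add_one_eq_two] using hu.1)

lemma contDiff_slice (hu : IsClassicalSolution σ μ d u) (t : ℝ) : ContDiff ℝ 2 (u t) :=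
  hu.1.comp (contDiff_const.prodMk contDiff_id)

lemma contDiff_slice_u_t (hu : IsClassicalSolution σ μ d u) {t : ℝ} (ht : 0 ≤ t) :
    ContDiff ℝ 2 (u_t u t) :=
  hu.2.1 t ht

lemma u_t_right_end (hu : IsClassicalSolution σ μ d u) {t : ℝ} (ht : 0 ≤ t) : u_t u t 1 = 0 :=
  UniqueDiffWithinAt.eq_deriv _ (uniqueDiffOn_Ici 0 t ht)
    (hasDerivAt_u_t hu.contDiff_uncurry t 1).hasDerivWithinAt
    ((hasDerivWithinAt_const t _ 0).congr (fun s hs => (hu.2.2.2 s hs).2) (hu.2.2.2 t ht).2)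

lemma sineCoeff_u_tt (hu : IsClassicalSolution σ μ d u) {t : ℝ} (ht : 0 ≤ t) (k : ℝ) :
    sineCoeff (u_t (u_t u) t) k = sineCoeff (deriv (deriv (u t))) k +
      σ * sineCoeff (deriv (deriv (u_t u t))) k - μ * sineCoeff (u_t u t) k := by
  have hcont_u_xx := continuous_deriv_deriv (hu.contDiff_slice t)
  have hcont_u_txx := (continuous_deriv_deriv (hu.contDiff_slice_u_t ht)).const_mul σ
  have hcont_u_t := (hu.contDiff_slice_u_t ht).continuous.const_mul (-μ)
  calc sineCoeff (u_t (u_t u) t) k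
      = sineCoeff (fun x => deriv (deriv (u t)) x + σ * deriv (deriv (u_t u t)) x +
          -μ * u_t u t x) k := by
        refine integral_congr fun x hx => ?_
        rw [uIcc_of_le zero_le_one] at hx
        have hpde : u_t (u_t u) t x = deriv (deriv (u t)) x + σ * deriv (deriv (u_t u t)) x -
          μ * u_t u t x := hu.2.2.1 t x ht hx
        simp only [hpde, neg_mul, sub_eq_add_neg]
    _ = _ := by
        rw [sineCoeff_add (hcont_u_xx.fun_add hcont_u_txx) hcont_u_t,
          sineCoeff_add hcont_u_xx hcont_u_txx, sineCoeff_const_mul, sineCoeff_const_mul]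
        ring

lemma isForcedMotion_sineCoeff (hu : IsClassicalSolution σ μ d u) {k : ℝ} (hk : sin k = 0) :
    IsForcedMotion (μ + k ^ 2 * σ) (k ^ 2) σ (fun t => √2 * k * u t 0) (fun t => √2 * k * u_t u t 0)
      (fun t => sineCoeff (u t) k) (fun t => sineCoeff (u_t u t) k) where
  hasDerivAt_force t _ := (hasDerivAt_u_t hu.contDiff_uncurry t 0).const_mul _
  hasDerivAt_pos t _ := hasDerivAt_sineCoeff hu.contDiff_uncurry k t
  hasDerivAt_vel t ht := by
    refine (hasDerivAt_sineCoeff hu.contDiff_uncurry_u_t k t).congr_deriv ?_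
    rw [hu.sineCoeff_u_tt ht, sineCoeff_deriv_deriv (hu.contDiff_slice t) hk (hu.2.2.2 t ht).2,
      sineCoeff_deriv_deriv (hu.contDiff_slice_u_t ht) hk (hu.u_t_right_end ht)]
    ring

end IsClassicalSolution

/-! ### Summation over the modes -/

lemma summable_sq_add {ι : Type*} {a b : ι → ℝ} (ha : Summable fun i => a i ^ 2)
    (hb : Summable fun i => b i ^ 2) : Summable fun i => (a i + b i) ^ 2 :=
  ((ha.add hb).mul_left 2).of_nonneg_of_le (fun _ => sq_nonneg _) fun _ => add_sq_le

lemma limsup_sqrt_tsum_sq_le {α ι : Type*} {l : Filter α} [l.NeBot] {y z : ι → α → ℝ}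
    {b c : ι → ℝ} (hy : ∀ᶠ t in l, ∀ i, |y i t| ≤ z i t + c i)
    (hz : ∀ i, Tendsto (z i) l (nhds 0)) (hzb : ∀ᶠ t in l, ∀ i, |z i t| ≤ b i)
    (hb : Summable fun i => b i ^ 2) (hc : Summable fun i => c i ^ 2) :
    limsup (fun t => √(∑' i, y i t ^ 2)) l ≤ √(∑' i, c i ^ 2) := by
  have hdom : Summable fun i => (b i + |c i|) ^ 2 := summable_sq_add hb (by simpa only [sq_abs])
  have hle : ∀ᶠ t in l, ∀ i, (z i t + c i) ^ 2 ≤ (b i + |c i|) ^ 2 := hzb.mono fun t ht i => by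
    rw [← sq_abs]
    exact pow_le_pow_left₀ (abs_nonneg _) ((abs_add_le _ _).trans (add_le_add_left (ht i) _)) 2
  have hlim : Tendsto (fun t => √(∑' i, (z i t + c i) ^ 2)) l (nhds √(∑' i, c i ^ 2)) := by
    refine (tendsto_tsum_of_dominated_convergence hdom (fun i => ?_) ?_).sqrt
    · simpa using ((hz i).add_const (c i)).pow 2
    · exact hle.mono fun t ht i => (norm_of_nonneg (sq_nonneg _)).trans_le (ht i)
  rw [← hlim.limsup_eq]
  refine limsup_le_limsup ?_ (isCoboundedUnder_le_of_le l fun _ => sqrt_nonneg _)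
    hlim.isBoundedUnder_le
  filter_upwards [hy, hle] with t hyt hlet
  have hsum : Summable fun i => (z i t + c i) ^ 2 :=
    hdom.of_nonneg_of_le (fun _ => sq_nonneg _) hlet
  have hsq (i : ι) : y i t ^ 2 ≤ (z i t + c i) ^ 2 := sq_le_sq.2 ((hyt i).trans (le_abs_self _))
  exact sqrt_le_sqrt ((hsum.of_nonneg_of_le (fun _ => sq_nonneg _) hsq).tsum_le_tsum hsq hsum)

lemma exists_mul_sq_le_damping {σ μ : ℝ} (hμ : -(π ^ 2 * σ) < μ) (hσ : 0 < σ) :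
    ∃ γ, 0 < γ ∧ ∀ n : ℕ, 0 < n → γ * (n * π) ^ 2 ≤ μ + (n * π) ^ 2 * σ := by
  refine ⟨σ + min μ 0 / π ^ 2, ?_, fun n hn => ?_⟩
  · have hmin : -(σ * π ^ 2) < min μ 0 := lt_min (by linarith)
      (neg_neg_of_pos (by positivity))
    have := (lt_div_iff₀ (pow_pos pi_pos 2)).2 (by linarith : -σ * π ^ 2 < min μ 0)
    linarith
  · have hn1 : (1 : ℝ) ≤ (n : ℝ) ^ 2 := one_le_pow₀ (by exact_mod_cast hn)
    calc (σ + min μ 0 / π ^ 2) * (n * π) ^ 2 = (n : ℝ) ^ 2 * min μ 0 + (n * π) ^ 2 * σ := by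
          field_simp; ring
      _ ≤ 1 * min μ 0 + (n * π) ^ 2 * σ :=
          add_le_add_left (mul_le_mul_of_nonpos_right hn1 (min_le_right μ 0)) _
      _ ≤ μ + (n * π) ^ 2 * σ := by rw [one_mul]; gcongr; exact min_le_left μ 0

lemma abs_le_supD {d : ℝ → ℝ} (hd : ∃ M, ∀ t, 0 ≤ t → |d t| ≤ M) {t : ℝ} (ht : 0 ≤ t) :
    |d t| ≤ supD d := by
  obtain ⟨M, hM⟩ := hd
  exact le_csSup ⟨M, by rintro _ ⟨s, hs, rfl⟩; exact hM s hs⟩ ⟨t, ht, rfl⟩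

namespace IsClassicalSolution

variable {σ μ D : ℝ} {d : ℝ → ℝ} {u : ℝ → ℝ → ℝ}

lemma L2Norm_eq_sqrt_tsum (hu : IsClassicalSolution σ μ d u) (t : ℝ) :
    L2Norm u t = √(∑' n : ℕ, sineCoeff (u t) ((n + 1 : ℕ) * π) ^ 2) := by
  rw [L2Norm, (hasSum_sq_sineCoeff (hu.contDiff_slice t).continuous).tsum_eq]

lemma exists_transient_sineCoeff (hu : IsClassicalSolution σ μ d u) (hσ : 0 < σ)
    (hD : ∀ t, 0 ≤ t → |d t| ≤ D) {n : ℕ} (hn : 0 < n) {γ : ℝ} (hγ : 0 < γ)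
    (hdamp : γ * (n * π) ^ 2 ≤ μ + (n * π) ^ 2 * σ) :
    ∃ z : ℝ → ℝ, Tendsto z atTop (nhds 0) ∧
      (∀ t, 0 ≤ t → |z t| ≤ |sineCoeff (u 0) (n * π)| +
        2 / γ * (√2 * (∫ x in 0..1, |u_t u 0 x|) + σ * (√2 * D)) / (n * π)) ∧
      ∀ t, 0 ≤ t → |sineCoeff (u t) (n * π)| ≤ z t + √2 * modeGain σ μ n / (n * π) * D := by
  set k := n * π
  set I := ∫ x in 0..1, |u_t u 0 x|
  have hk1 : 1 ≤ k := one_le_mul_of_one_le_of_one_le (by exact_mod_cast hn)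
    (by linarith [pi_gt_three])
  have hk : 0 < k := zero_lt_one.trans_le hk1
  have ha : 0 < μ + k ^ 2 * σ := (mul_pos hγ (pow_pos hk 2)).trans_le hdamp
  have hforce (t : ℝ) (ht : 0 ≤ t) : |√2 * k * u t 0| ≤ √2 * k * D := by
    rw [abs_mul, abs_of_nonneg (by positivity), (hu.2.2.2 t ht).1]
    exact mul_le_mul_of_nonneg_left (hD t ht) (by positivity)
  obtain ⟨e, v, K, hL1⟩ := exists_impulseResponse hσ hn ha
  obtain ⟨z, hz, hz_le, hy⟩ := K.exists_transient ha (sq_nonneg k)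
    (hu.isForcedMotion_sineCoeff (sin_nat_mul_pi n)) hforce hL1
  refine ⟨z, hz, fun t ht => (hz_le t ht).trans (add_le_add_right ?_ _), fun t ht => ?_⟩
  · have hI : 0 ≤ I := intervalIntegral.integral_nonneg zero_le_one fun _ _ => abs_nonneg _
    have hvel : |sineCoeff (u_t u 0) k - σ * (√2 * k * u 0 0)| ≤ √2 * I + σ * (√2 * k * D) := by
      refine (abs_sub _ _).trans (add_le_add
        (abs_sineCoeff_le (hu.contDiff_slice_u_t le_rfl).continuous k) ?_)
      rw [abs_mul, abs_of_pos hσ]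
      exact mul_le_mul_of_nonneg_left (hforce 0 le_rfl) hσ.le
    calc 2 / (μ + k ^ 2 * σ) * |sineCoeff (u_t u 0) k - σ * (√2 * k * u 0 0)|
        ≤ 2 / (γ * k ^ 2) * (√2 * I * k + σ * (√2 * k * D)) := by
          gcongr
          refine hvel.trans (add_le_add_left (le_mul_of_one_le_right (by positivity) hk1) _)
      _ = 2 / γ * (√2 * I + σ * (√2 * D)) / k := by field_simp
  · have hgain : √2 * k * D * (modeGain σ μ n / k ^ 2) = √2 * modeGain σ μ n / k * D := by
      field_simp
    exact (hy t ht).trans_eq (congrArg _ hgain)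

end IsClassicalSolution

theorem asymptotic_gain_L2_upper_bound_general {σ μ : ℝ} (hσ : 0 < σ) (hμ : -(π ^ 2 * σ) < μ)
    {d : ℝ → ℝ} (hd : ∃ M, ∀ t, 0 ≤ t → |d t| ≤ M)
    {u : ℝ → ℝ → ℝ} (hu : IsClassicalSolution σ μ d u) :
    limsup (fun t => L2Norm u t) atTop ≤ Gconst μ σ * supD d := by
  obtain ⟨γ, hγ, hdamp⟩ := exists_mul_sq_le_damping hμ hσ
  choose z hz hz_le hy using fun n : ℕ => hu.exists_transient_sineCoeff hσ
    (fun t => abs_le_supD hd) n.succ_pos hγ (hdamp _ n.succ_pos)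
  have hD : 0 ≤ supD d := (abs_nonneg _).trans (abs_le_supD hd le_rfl)
  have hinit : Summable fun n : ℕ => |sineCoeff (u 0) ((n + 1 : ℕ) * π)| ^ 2 := by
    simpa only [sq_abs] using (hasSum_sq_sineCoeff (hu.contDiff_slice 0).continuous).summable
  have hgain := (summable_modeGain hσ μ).mul_right (supD d ^ 2)
  simp_rw [← mul_pow] at hgain
  calc limsup (fun t => L2Norm u t) atTop
      = limsup (fun t => √(∑' n : ℕ, sineCoeff (u t) ((n + 1 : ℕ) * π) ^ 2)) atTop := by
        simp_rw [hu.L2Norm_eq_sqrt_tsum]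
    _ ≤ √(∑' n : ℕ, (√2 * modeGain σ μ (n + 1) / ((n + 1 : ℕ) * π) * supD d) ^ 2) :=
        limsup_sqrt_tsum_sq_le ((eventually_ge_atTop 0).mono fun t ht n => hy n t ht) hz
          ((eventually_ge_atTop 0).mono fun t ht n => hz_le n t ht)
          (summable_sq_add hinit (summable_sq_div_nat_mul_pi _)) hgain
    _ = Gconst μ σ * supD d := by
        simp_rw [mul_pow _ (supD d), tsum_mul_right]
        rw [sqrt_mul' _ (sq_nonneg _), sqrt_sq hD, Gconst_eq_sqrt_tsum]

/-- `G(μ,σ)` is an upper bound for the asymptotic gain of the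
displacement in the spatial L² norm, for all `σ > 0`, `μ ≥ 0`. -/
theorem asymptotic_gain_L2_upper_bound
    (σ μ : ℝ) (hσ : 0 < σ) (hμ : 0 ≤ μ)
    (d : ℝ → ℝ) (hd : BddC2 d)
    (u : ℝ → ℝ → ℝ) (hu : IsClassicalSolution σ μ d u) :
    Filter.limsup (fun t => L2Norm u t) Filter.atTop ≤ Gconst μ σ * supD d := by
  exact asymptotic_gain_L2_upper_bound_general hσ
    (by linarith [mul_pos (pow_pos pi_pos 2) hσ]) hd.2 hu
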